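/- Let F_* : ℝ² → ℝ² be defined by F_*(x,y) = (x + (1/2)·sin(2π(y + (1/2)·sin(2πx))), y + (1/2)·sin(2πx)). Then F_* is a lift of a homeomorphism of the two-torus homotopic to the identity; the points (1/4,0), (0,1/4), (3/4,0), (0,3/4) satisfy F_*²(1/4,0) = (1/4,0) + (0,1), F_*²(0,1/4) = (0,1/4) + (1,0), F_*²(3/4,0) = (3/4,0) + (0,−1), F_*²(0,3/4) = (0,3/4) + (−1,0), so that (0,1/2), (1/2,0), (0,−1/2), (−1/2,0) ∈ ρ(F_*); and consequently, since ρ(F_*) is convex, the square Q = {(x,y) ∈ ℝ² : |x| + |y| ≤ 1/2} is contained in ρ(F_*). -/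

import Mathlib

noncomputable section
open Filter Topology Metric Set MeasureTheory

/-- Euclidean space `ℝ^d`. -/
abbrev E (d : ℕ) := EuclideanSpace ℝ (Fin d)

/-- The integer lattice `ℤ^d` as an additive subgroup of `ℝ^d`. -/
def ZLat (d : ℕ) : AddSubgroup (E d) where
  carrier := {z | ∀ i, ∃ m : ℤ, z i = (m : ℝ)}
  zero_mem' := fun i => ⟨0, by simp⟩
  add_mem' := by
    intro x y hx hy i
    obtain ⟨m, hm⟩ := hx i
    obtain ⟨n, hn⟩ := hy i
    exact ⟨m + n, by simp [PiLp.add_apply, hm, hn]⟩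
  neg_mem' := by
    intro x hx i
    obtain ⟨m, hm⟩ := hx i
    exact ⟨-m, by simp [PiLp.neg_apply, hm]⟩

/-- The torus `T^d = ℝ^d / ℤ^d`. -/
abbrev T (d : ℕ) := E d ⧸ ZLat d

/-- The canonical projection `π : ℝ^d → T^d`. -/
def tpi (d : ℕ) : E d → T d := QuotientAddGroup.mk

/-- The set of rotation vectors of orbit segments starting in `W ⊆ ℝ^d`:
`{ρ | ∃ nᵢ → ∞, zᵢ ∈ W, (F^{nᵢ}(zᵢ) - zᵢ)/nᵢ → ρ}`. -/
def rotRel {d : ℕ} (F : E d → E d) (W : Set (E d)) : Set (E d) :=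
  {ρ | ∃ (n : ℕ → ℕ) (z : ℕ → E d),
    Tendsto n atTop atTop ∧ (∀ i, z i ∈ W) ∧
    Tendsto (fun i => (n i : ℝ)⁻¹ • (F^[n i] (z i) - z i)) atTop (𝓝 ρ)}

/-- The Misiurewicz–Ziemian rotation set `ρ(F)` of a lift `F`. -/
def rotSet {d : ℕ} (F : E d → E d) : Set (E d) := rotRel F Set.univ

/-- The rotation subset `ρ_U(F)` for `U ⊆ T^d` (starting points in `π⁻¹(U)`). -/
def rotU {d : ℕ} (F : E d → E d) (U : Set (T d)) : Set (E d) :=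
  rotRel F (tpi d ⁻¹' U)

/-- `F` is a lift of the torus homeomorphism `f` (which is then homotopic to the
identity, as expressed by commutation with the deck translations). -/
def IsLift {d : ℕ} (F : E d ≃ₜ E d) (f : T d ≃ₜ T d) : Prop :=
  (∀ z : E d, tpi d (F z) = f (tpi d z)) ∧ ∀ z : E d, ∀ m ∈ ZLat d, F (z + m) = F z + m

/-- `U ⊆ T^d` is bounded: the connected components of `π⁻¹(U)` are bounded. -/
def BoundedSet {d : ℕ} (U : Set (T d)) : Prop :=
  ∀ z ∈ tpi d ⁻¹' U, Bornology.IsBounded (connectedComponentIn (tpi d ⁻¹' U) z)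

/-- `U ⊆ T^d` is recurrent: `f^n(U) ∩ U ≠ ∅` for infinitely many `n ≥ 1`. -/
def Recurrent {d : ℕ} (f : T d ≃ₜ T d) (U : Set (T d)) : Prop :=
  {n : ℕ | 1 ≤ n ∧ ((⇑f)^[n] '' U ∩ U).Nonempty}.Infinite

open Real

/-- The point `(a, b) ∈ ℝ²`. -/
def pt (a b : ℝ) : E 2 := (WithLp.equiv 2 (Fin 2 → ℝ)).symm ![a, b]

/-- The lift `F_*(x,y) = (x + ½ sin(2π(y + ½ sin(2πx))), y + ½ sin(2πx))`. -/
def Fstar : E 2 → E 2 := fun z =>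
  pt (z 0 + (1 / 2) * Real.sin (2 * π * (z 1 + (1 / 2) * Real.sin (2 * π * z 0))))
     (z 1 + (1 / 2) * Real.sin (2 * π * z 0))

/-!
The vertices of `Q` are rotation vectors of periodic points, so the point is that `ρ(F)` is convex
for every lift `F` of a homeomorphism of the two-torus homotopic to the identity.

Let `A` be the image under `Fⁿ` of the unit square `[0, 1)²`. As `F` is injective and commutes with
integer translations, no two distinct points of `A` differ by a lattice vector. Suppose that a
segment with endpoints in `A` has a point `v` far from `A`. A path `γ` in `A` joining the endpoints
goes around a large disc centred at `v`, and then the winding number about a suitable lattice point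
`m` of the chords `γ s - γ t`, as `(s, t)` runs along two sides of a triangle whose third side is
the diagonal, is nonzero. Hence some chord equals `m`, a contradiction. So `A`, and with it the set
`Kₙ` of displacements `Fⁿ(z) - z`, is convex up to an error that does not depend on `n`. It follows
that the rotation set is the intersection over `n` of `{ρ | n • ρ ∈ closure (convexHull ℝ Kₙ)}`, a
convex set.
-/

section ContinuousLogarithm

variable {X : Type*} [TopologicalSpace X]

theorem exists_continuous_exp_eq [SimplyConnectedSpace X] [LocallyPathConnectedSpace X]
    {g : X → ℂ} (hg : Continuous g) (hg₀ : ∀ x, g x ≠ 0) :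
    ∃ L : X → ℂ, Continuous L ∧ ∀ x, Complex.exp (L x) = g x := by
  obtain ⟨x₀⟩ := (inferInstance : Nonempty X)
  obtain ⟨L, ⟨-, hL⟩, -⟩ := Complex.isCoveringMapOn_exp.existsUnique_continuousMap_lifts
    ⟨g, hg⟩ (Complex.exp_log (hg₀ x₀)) hg₀
  exact ⟨L, L.continuous, congrFun hL⟩

theorem sub_eq_sub_of_exp_eq_exp [PreconnectedSpace X] {L L' : X → ℂ} (hL : Continuous L)
    (hL' : Continuous L') (h : ∀ x, Complex.exp (L x) = Complex.exp (L' x)) (x y : X) :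
    L x - L y = L' x - L' y := by
  have hexp : ∀ z, Complex.exp (L z - L' z) = 1 := fun z => by
    rw [Complex.exp_sub, h, div_self (Complex.exp_ne_zero _)]
  have hconst : L x - L' x = L y - L' y :=
    Complex.isCoveringMap_exp.const_of_comp (hL.sub hL')
      (fun z z' => Subtype.ext ((hexp z).trans (hexp z').symm)) x y
  linear_combination hconst

end ContinuousLogarithm

/-- If no chord of the curve `γ` equals `m`, the function `γ s - γ t - m` has a continuous logarithm
on the whole plane, which is constant on the diagonal. -/
theorem log_increment_add_log_increment_eq_zero {γ : ℝ → ℂ} (hγ : Continuous γ) {m : ℂ}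
    (hm : ∀ s t, γ s - γ t ≠ m) {α β : ℝ} {L₁ L₂ : ℝ → ℂ} (hL₁ : Continuous L₁)
    (hL₂ : Continuous L₂) (hexp₁ : ∀ s, Complex.exp (L₁ s) = γ s - γ α - m)
    (hexp₂ : ∀ t, Complex.exp (L₂ t) = γ β - γ t - m) :
    L₁ β - L₁ α + (L₂ β - L₂ α) = 0 := by
  obtain ⟨L, hL, hexp⟩ := exists_continuous_exp_eq
    (g := fun p : ℝ × ℝ => γ p.1 - γ p.2 - m) (by fun_prop) (fun p => sub_ne_zero.2 (hm _ _))
  have hdiag : L (β, β) - L (α, α) = 0 := by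
    simpa using sub_eq_sub_of_exp_eq_exp (L := fun s => L (s, s)) (L' := fun _ => L (α, α))
      (by fun_prop) continuous_const (fun s => by simp [hexp]) β α
  have hinc₁ : L₁ β - L₁ α = L (β, α) - L (α, α) :=
    sub_eq_sub_of_exp_eq_exp (L' := fun s => L (s, α)) hL₁ (by fun_prop)
      (fun s => by rw [hexp₁, hexp]) β α
  have hinc₂ : L₂ β - L₂ α = L (β, β) - L (β, α) :=
    sub_eq_sub_of_exp_eq_exp (L' := fun t => L (β, t)) hL₂ (by fun_prop)
      (fun t => by rw [hexp₂, hexp]) β α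
  linear_combination hinc₁ + hinc₂ + hdiag

theorem log_I_mul {z : ℂ} (hz : z ≠ 0) (harg : Complex.arg z ≤ 0) :
    Complex.log (Complex.I * z) = π / 2 * Complex.I + Complex.log z := by
  rw [(Complex.log_mul_eq_add_log_iff Complex.I_ne_zero hz).2, Complex.log_I]
  rw [Complex.arg_I]
  constructor <;> linarith [Complex.neg_pi_lt_arg z, pi_pos]

theorem log_neg_I_mul {z : ℂ} (hz : z ≠ 0) (harg : 0 ≤ Complex.arg z) :
    Complex.log (-Complex.I * z) = -(π / 2) * Complex.I + Complex.log z := by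
  rw [(Complex.log_mul_eq_add_log_iff (neg_ne_zero.2 Complex.I_ne_zero) hz).2, Complex.log_neg_I]
  rw [Complex.arg_neg_I]
  constructor <;> linarith [Complex.arg_le_pi z, pi_pos]

theorem neg_I_mul_mem_slitPlane {z : ℂ} (hz : z ≠ 0) (him : 0 ≤ z.im) :
    -Complex.I * z ∈ Complex.slitPlane := by
  rw [Complex.mem_slitPlane_iff]
  rcases him.lt_or_eq with h | h
  · left; simpa using h
  · right
    have hre : z.re ≠ 0 := fun hre => hz (Complex.ext hre h.symm)
    simpa using hre

theorem exp_log_neg_I_mul_add_log {z w : ℂ} (h₁ : -Complex.I * z ∈ Complex.slitPlane)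
    (h₂ : 1 + -w / z ∈ Complex.slitPlane) :
    Complex.exp (Complex.log (-Complex.I * z) + Complex.log (1 + -w / z) + π / 2 * Complex.I) =
      z - w := by
  have hz : z ≠ 0 := right_ne_zero_of_mul (Complex.slitPlane_ne_zero h₁)
  rw [Complex.exp_add, Complex.exp_add, Complex.exp_log (Complex.slitPlane_ne_zero h₁),
    Complex.exp_log (Complex.slitPlane_ne_zero h₂), Complex.exp_pi_div_two_mul_I]
  field_simp
  linear_combination (-z + w) * Complex.I_sq

theorem log_one_add_div_ofReal {c : ℝ} (hc : 0 < c) {z : ℂ} (hz : c + z ≠ 0) :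
    Complex.log (1 + z / c) = Complex.log (c + z) - Real.log c := by
  have hc' : (c : ℂ) ≠ 0 := by exact_mod_cast hc.ne'
  rw [one_add_div hc', div_eq_inv_mul, ← Complex.ofReal_inv,
    Complex.log_ofReal_mul (inv_pos.2 hc) hz, Real.log_inv]
  push_cast
  ring

/-- The left side is the total increment of the logarithms of `γ s - γ α - m` and `γ β - γ t - m` in
`exists_sub_eq_of_arch`: the chords turn once around `m`. -/
theorem arch_log_increment {a b : ℝ} (ha : 0 < a) (hb : 0 < b) {w : ℂ} (hw : 0 < w.im) :
    (Complex.log (-Complex.I * b) + Complex.log (1 + -w / b))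
        - (Complex.log (-Complex.I * (-a : ℝ)) + Complex.log (1 + -w / (-a : ℝ)))
      + (Complex.log (-Complex.I * (a + w)) - Complex.log (Complex.I * (b + -w)))
      = -(2 * π * Complex.I) := by
  have haw : 0 < (a + w).im := by simpa using hw
  have hbw : (b + -w).im < 0 := by simpa using hw
  have haw₀ : a + w ≠ 0 := fun h => by simp [h] at haw
  have hbw₀ : b + -w ≠ 0 := fun h => by simp [h] at hbw
  have hlogb : Complex.log (-Complex.I * b) = -(π / 2) * Complex.I + Real.log b := by
    rw [log_neg_I_mul (by exact_mod_cast hb.ne') (Complex.arg_ofReal_of_nonneg hb.le).ge,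
      Complex.ofReal_log hb.le]
  have hloga : Complex.log (-Complex.I * (-a : ℝ)) = π / 2 * Complex.I + Real.log a := by
    rw [Complex.ofReal_neg, neg_mul_neg,
      log_I_mul (by exact_mod_cast ha.ne') (Complex.arg_ofReal_of_nonneg ha.le).le,
      Complex.ofReal_log ha.le]
  have hdiv : -w / (-a : ℝ) = w / a := by rw [Complex.ofReal_neg, neg_div_neg_eq]
  rw [hdiv, log_one_add_div_ofReal hb hbw₀, log_one_add_div_ofReal ha haw₀, hlogb, hloga,
    log_neg_I_mul haw₀ (Complex.arg_nonneg_iff.2 haw.le),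
    log_I_mul hbw₀ (Complex.arg_neg_iff.2 hbw).le]
  ring

theorem exists_sub_eq_of_arch {γ : ℝ → ℂ} (hγ : Continuous γ) (him : ∀ s, 0 ≤ (γ s).im)
    {α β a b : ℝ} (ha : 0 < a) (hb : 0 < b) (hα : γ α = (-a : ℝ)) (hβ : γ β = b)
    {w : ℂ} (hw : 0 < w.im) (hwγ : ∀ s, ‖w‖ < ‖γ s‖) :
    ∃ s t, γ s - γ t = a + w := by
  by_contra! hne
  have hγ₀ : ∀ s, γ s ≠ 0 := fun s => norm_pos_iff.1 ((norm_nonneg w).trans_lt (hwγ s))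
  have hslit₁ : ∀ s, -Complex.I * γ s ∈ Complex.slitPlane := fun s =>
    neg_I_mul_mem_slitPlane (hγ₀ s) (him s)
  have hslit₂ : ∀ s, 1 + -w / γ s ∈ Complex.slitPlane := fun s => by
    apply Complex.mem_slitPlane_of_norm_lt_one
    rw [norm_div, norm_neg, div_lt_one ((norm_nonneg w).trans_lt (hwγ s))]
    exact hwγ s
  have hslit₃ : ∀ t, Complex.I * (γ β - γ t - (a + w)) ∈ Complex.slitPlane := fun t => by
    refine Or.inl ?_
    simp only [hβ, Complex.I_mul_re, Complex.sub_im, Complex.add_im, Complex.ofReal_im]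
    linarith [him t]
  let L₁ : ℝ → ℂ := fun s =>
    Complex.log (-Complex.I * γ s) + Complex.log (1 + -w / γ s) + π / 2 * Complex.I
  let L₂ : ℝ → ℂ := fun t => Complex.log (Complex.I * (γ β - γ t - (a + w))) - π / 2 * Complex.I
  have hL₁ : Continuous L₁ := ((Continuous.clog (by fun_prop) hslit₁).add
    (Continuous.clog (continuous_const.add (continuous_const.div hγ hγ₀)) hslit₂)).add
    continuous_const
  have hL₂ : Continuous L₂ := (Continuous.clog (by fun_prop) hslit₃).sub continuous_const
  have hexp₁ : ∀ s, Complex.exp (L₁ s) = γ s - γ α - (a + w) := fun s => by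
    rw [exp_log_neg_I_mul_add_log (hslit₁ s) (hslit₂ s), hα]
    push_cast
    ring
  have hexp₂ : ∀ t, Complex.exp (L₂ t) = γ β - γ t - (a + w) := fun t => by
    simp only [L₂, Complex.exp_sub, Complex.exp_log (Complex.slitPlane_ne_zero (hslit₃ t)),
      Complex.exp_pi_div_two_mul_I]
    field_simp
  have hzero := log_increment_add_log_increment_eq_zero hγ hne hL₁ hL₂ hexp₁ hexp₂
  have hturn : L₁ β - L₁ α + (L₂ β - L₂ α) = -(2 * π * Complex.I) := by
    rw [← arch_log_increment ha hb hw]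
    simp only [L₁, L₂, hα, hβ]
    push_cast
    ring_nf
  exact neg_ne_zero.2 Complex.two_pi_I_ne_zero (hturn.symm.trans hzero)

theorem exists_nontrivial_chord_mem_of_arch {Λ : Set ℂ} {r : ℝ}
    (hΛ : ∀ z, ∃ m ∈ Λ, dist m z < r) {γ : ℝ → ℂ} (hγ : Continuous γ)
    (him : ∀ s, 0 ≤ (γ s).im) {α β a b : ℝ} (ha : 0 < a) (hb : 0 < b) (hα : γ α = (-a : ℝ))
    (hβ : γ β = b) (hfar : ∀ s, 2 * r ≤ ‖γ s‖) :
    ∃ s t, γ s - γ t ∈ Λ ∧ γ s ≠ γ t := by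
  obtain ⟨m, hmΛ, hm⟩ := hΛ (a + r * Complex.I)
  have hr : 0 < r := dist_nonneg.trans_lt hm
  have hdist : ‖m - a - r * Complex.I‖ < r := by rwa [sub_sub, ← dist_eq_norm]
  have him_pos : 0 < (m - a).im := by
    have h := ((Complex.abs_im_le_norm _).trans_lt hdist)
    rw [abs_lt] at h
    simp only [Complex.sub_im, Complex.mul_im, Complex.ofReal_re, Complex.ofReal_im, Complex.I_im,
      Complex.I_re] at h ⊢
    linarith
  have hnorm : ‖m - a‖ < 2 * r := by
    calc ‖m - a‖ = ‖(m - a - r * Complex.I) + r * Complex.I‖ := by rw [sub_add_cancel]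
      _ ≤ ‖m - a - r * Complex.I‖ + ‖r * Complex.I‖ := norm_add_le _ _
      _ < r + r := by
        have : ‖r * Complex.I‖ = r := by simp [abs_of_pos hr]
        linarith
      _ = 2 * r := (two_mul r).symm
  obtain ⟨s, t, hst⟩ := exists_sub_eq_of_arch hγ him ha hb hα hβ him_pos
    fun s => hnorm.trans_le (hfar s)
  rw [add_sub_cancel] at hst
  refine ⟨s, t, hst ▸ hmΛ, fun h => ?_⟩
  rw [← hst, h, sub_self] at him_pos
  simp at him_pos

theorem exists_arch {γ : ℝ → ℂ} (hγ : Continuous γ) (hγ₀ : ∀ s, γ s ≠ 0) {α β : ℝ} (hαβ : α ≤ β)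
    (hα : (γ α).im = 0) (hα' : (γ α).re ≤ 0) (hβ : (γ β).im = 0) (hβ' : 0 ≤ (γ β).re) :
    ∃ t₁ t₂, t₁ ≤ t₂ ∧ (γ t₁).im = 0 ∧ (γ t₁).re < 0 ∧ (γ t₂).im = 0 ∧ 0 < (γ t₂).re ∧
      ∀ s ∈ Ioo t₁ t₂, (γ s).im ≠ 0 := by
  have hre : ∀ s, (γ s).im = 0 → (γ s).re ≠ 0 := fun s h h' => hγ₀ s (Complex.ext h' h)
  have hcre : Continuous fun s => (γ s).re := Complex.continuous_re.comp hγ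
  have hcim : Continuous fun s => (γ s).im := Complex.continuous_im.comp hγ
  obtain ⟨t₂, ⟨ht₂, hre₂, him₂⟩, hleast⟩ :=
    (isCompact_Icc.inter_right ((isClosed_le continuous_const hcre).inter
      (isClosed_eq hcim continuous_const))).exists_isLeast
      (s := Icc α β ∩ ({s | 0 ≤ (γ s).re} ∩ {s | (γ s).im = 0}))
      ⟨β, right_mem_Icc.2 hαβ, hβ', hβ⟩
  obtain ⟨t₁, ⟨ht₁, hre₁, him₁⟩, hgreatest⟩ :=
    (isCompact_Icc.inter_right ((isClosed_le hcre continuous_const).inter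
      (isClosed_eq hcim continuous_const))).exists_isGreatest
      (s := Icc α t₂ ∩ ({s | (γ s).re ≤ 0} ∩ {s | (γ s).im = 0}))
      ⟨α, left_mem_Icc.2 ht₂.1, hα', hα⟩
  refine ⟨t₁, t₂, ht₁.2, him₁, lt_of_le_of_ne hre₁ (hre _ him₁), him₂,
    lt_of_le_of_ne hre₂ (hre _ him₂).symm, fun s hs him => ?_⟩
  rcases le_total 0 (γ s).re with h | h
  · exact (hleast ⟨⟨ht₁.1.trans hs.1.le, hs.2.le.trans ht₂.2⟩, h, him⟩).not_gt hs.2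
  · exact (hgreatest ⟨⟨ht₁.1.trans hs.1.le, hs.2.le⟩, h, him⟩).not_gt hs.1

theorem forall_nonneg_or_forall_nonpos_of_ne_zero {f : ℝ → ℝ} {a b : ℝ}
    (hf : ContinuousOn f (Ioo a b)) (ha : f a = 0) (hb : f b = 0) (h₀ : ∀ s ∈ Ioo a b, f s ≠ 0) :
    (∀ s ∈ Icc a b, 0 ≤ f s) ∨ ∀ s ∈ Icc a b, f s ≤ 0 := by
  by_contra! h
  obtain ⟨⟨x, hx, hfx⟩, y, hy, hfy⟩ := h
  have hIoo : ∀ s ∈ Icc a b, f s ≠ 0 → s ∈ Ioo a b := fun s hs hfs =>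
    ⟨hs.1.lt_of_ne fun h => hfs (h ▸ ha), hs.2.lt_of_ne fun h => hfs (h ▸ hb)⟩
  obtain ⟨s, hs, hfs⟩ := isPreconnected_Ioo.intermediate_value (hIoo x hx hfx.ne)
    (hIoo y hy hfy.ne') hf ⟨hfx.le, hfy.le⟩
  exact h₀ s hs hfs

theorem exists_nontrivial_chord_mem {Λ : Set ℂ} {r : ℝ} (hΛ : ∀ z, ∃ m ∈ Λ, dist m z < r)
    {γ : ℝ → ℂ} (hγ : Continuous γ) {α β : ℝ} (hαβ : α ≤ β)
    (hα : (γ α).im = 0) (hα' : (γ α).re ≤ 0) (hβ : (γ β).im = 0) (hβ' : 0 ≤ (γ β).re)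
    (hfar : ∀ s, 2 * r ≤ ‖γ s‖) :
    ∃ s t, γ s - γ t ∈ Λ ∧ γ s ≠ γ t := by
  have hr : 0 < 2 * r := by
    obtain ⟨m, -, hm⟩ := hΛ 0
    linarith [dist_nonneg.trans_lt hm]
  obtain ⟨t₁, t₂, hle, him₁, hre₁, him₂, hre₂, hne⟩ := exists_arch hγ
    (fun s => norm_pos_iff.1 (hr.trans_le (hfar s))) hαβ hα hα' hβ hβ'
  let η : ℝ → ℂ := fun s => γ (projIcc t₁ t₂ hle s)
  have hη : Continuous η := hγ.comp (continuous_subtype_val.comp continuous_projIcc)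
  have hη₁ : η t₁ = (γ t₁).re := by
    simp only [η, projIcc_left]
    exact Complex.ext rfl him₁
  have hη₂ : η t₂ = (γ t₂).re := by
    simp only [η, projIcc_right]
    exact Complex.ext rfl him₂
  rcases forall_nonneg_or_forall_nonpos_of_ne_zero
    (Complex.continuous_im.comp hγ).continuousOn him₁ him₂ hne with him | him
  · obtain ⟨s, t, hmem, hst⟩ := exists_nontrivial_chord_mem_of_arch hΛ hη
      (fun s => him _ (projIcc t₁ t₂ hle s).2) (neg_pos.2 hre₁) hre₂ (by rw [neg_neg, hη₁]) hη₂
      fun s => hfar _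
    exact ⟨_, _, hmem, hst⟩
  · obtain ⟨s, t, hmem, hst⟩ := exists_nontrivial_chord_mem_of_arch hΛ (γ := fun s => -η s)
      hη.neg (fun s => neg_nonneg.2 (him _ (projIcc t₁ t₂ hle s).2)) hre₂ (neg_pos.2 hre₁)
      (by rw [hη₂, Complex.ofReal_neg]) (by rw [hη₁, Complex.ofReal_neg])
      fun s => (hfar _).trans_eq (norm_neg _).symm
    rw [neg_sub_neg] at hmem
    exact ⟨_, _, hmem, fun h => hst (neg_inj.2 h.symm)⟩

theorem exists_norm_eq_one_mul_sub_eq {x y v : ℂ} (hv : v ∈ segment ℝ x y) (hvy : v ≠ y) :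
    ∃ u : ℂ, ‖u‖ = 1 ∧ (∃ a : ℝ, 0 ≤ a ∧ u * (x - v) = (-a : ℝ)) ∧ u * (y - v) = ‖y - v‖ := by
  have hyv : y - v ≠ 0 := sub_ne_zero.2 hvy.symm
  obtain ⟨c, hc, hxv⟩ := (mem_segment_iff_sameRay.1 hv).exists_nonneg_right hyv
  have hxv' : x - v = -(c * (y - v)) := by rw [← Complex.real_smul, ← hxv, neg_sub]
  refine ⟨‖y - v‖ / (y - v), ?_, ⟨c * ‖y - v‖, by positivity, ?_⟩, div_mul_cancel₀ _ hyv⟩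
  · rw [norm_div, Complex.norm_real, norm_norm, div_self (norm_ne_zero_iff.2 hyv)]
  · rw [hxv']
    push_cast
    field_simp

theorem exists_dist_lt_of_mem_segment {A Λ : Set ℂ} (hA : IsPathConnected A) {r : ℝ}
    (hΛ : ∀ z, ∃ m ∈ Λ, dist m z < r) (hinj : ∀ x ∈ A, ∀ y ∈ A, x - y ∈ Λ → x = y)
    {x y v : ℂ} (hx : x ∈ A) (hy : y ∈ A) (hv : v ∈ segment ℝ x y) :
    ∃ p ∈ A, dist p v < 2 * r := by
  by_contra! hfar
  have hr : 0 < 2 * r := by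
    obtain ⟨m, -, hm⟩ := hΛ 0
    linarith [dist_nonneg.trans_lt hm]
  obtain ⟨u, hu, ⟨a, ha, hux⟩, huy⟩ :=
    exists_norm_eq_one_mul_sub_eq hv (dist_pos.1 (hr.trans_le (hfar y hy))).symm
  have hu₀ : u ≠ 0 := norm_ne_zero_iff.1 (by simp [hu])
  obtain ⟨γ, hγA⟩ := hA.joinedIn x hx y hy
  have hmemA : ∀ s, γ.extend s ∈ A := fun s => hγA (projIcc 0 1 zero_le_one s)
  have hΛu : ∀ z, ∃ m ∈ (u * ·) '' Λ, dist m z < r := fun z => by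
    obtain ⟨m, hmΛ, hm⟩ := hΛ (u⁻¹ * z)
    refine ⟨u * m, mem_image_of_mem _ hmΛ, ?_⟩
    calc dist (u * m) z = dist (u * m) (u * (u⁻¹ * z)) := by rw [mul_inv_cancel_left₀ hu₀]
      _ = dist m (u⁻¹ * z) := by rw [dist_eq_norm, ← mul_sub, norm_mul, hu, one_mul, dist_eq_norm]
      _ < r := hm
  obtain ⟨s, t, ⟨m, hmΛ, hm⟩, hne⟩ := exists_nontrivial_chord_mem hΛu
    (γ := fun s => u * (γ.extend s - v)) (by fun_prop) (zero_le_one' ℝ)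
    (by simp [hux]) (by simpa [hux] using ha) (by simp [huy]) (by simp [huy])
    (fun s => by simpa [hu, dist_eq_norm] using hfar _ (hmemA s))
  rw [← mul_sub, sub_sub_sub_cancel_right] at hm
  have hmem : γ.extend s - γ.extend t ∈ Λ := mul_left_cancel₀ hu₀ hm ▸ hmΛ
  exact hne (by rw [hinj _ (hmemA s) _ (hmemA t) hmem])

section CoarseConvexity

variable {V W : Type*} [NormedAddCommGroup V] [NormedSpace ℝ V] [NormedAddCommGroup W]
  [NormedSpace ℝ W]

/-- Convexity up to the error `c`: every segment between points of `A` lies within distance `c`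
of `A`. This is Gromov's quasiconvexity, for straight segments; convexity is the case `c = 0`. -/
def CoarselyConvex (c : ℝ) (A : Set V) : Prop :=
  ∀ ⦃x⦄, x ∈ A → ∀ ⦃y⦄, y ∈ A → ∀ ⦃v⦄, v ∈ segment ℝ x y → ∃ p ∈ A, dist p v ≤ c

theorem exists_mem_segment_dist_le {x y x' y' v : V} {k : ℝ} (hx : dist x' x ≤ k)
    (hy : dist y' y ≤ k) (hv : v ∈ segment ℝ x y) : ∃ v' ∈ segment ℝ x' y', dist v' v ≤ k := by
  obtain ⟨a, b, ha, hb, hab, rfl⟩ := hv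
  refine ⟨a • x' + b • y', ⟨a, b, ha, hb, hab, rfl⟩, ?_⟩
  calc dist (a • x' + b • y') (a • x + b • y)
      ≤ dist (a • x') (a • x) + dist (b • y') (b • y) := dist_add_add_le _ _ _ _
    _ = a * dist x' x + b * dist y' y := by
      rw [dist_smul₀, dist_smul₀, Real.norm_of_nonneg ha, Real.norm_of_nonneg hb]
    _ ≤ a * k + b * k := by gcongr
    _ = k := by rw [← add_mul, hab, one_mul]

namespace CoarselyConvex

variable {c : ℝ} {A : Set V}

theorem nonneg (hA : CoarselyConvex c A) (hne : A.Nonempty) : 0 ≤ c := by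
  obtain ⟨x, hx⟩ := hne
  obtain ⟨p, -, hp⟩ := hA hx hx (left_mem_segment ℝ x x)
  exact dist_nonneg.trans hp

theorem of_dist_le (hA : CoarselyConvex c A) {B : Set V} {k : ℝ}
    (hBA : ∀ b ∈ B, ∃ a ∈ A, dist a b ≤ k) (hAB : ∀ a ∈ A, ∃ b ∈ B, dist b a ≤ k) :
    CoarselyConvex (c + 2 * k) B := by
  intro x hx y hy v hv
  obtain ⟨x', hx'A, hx'⟩ := hBA x hx
  obtain ⟨y', hy'A, hy'⟩ := hBA y hy
  obtain ⟨v', hv', hv'v⟩ := exists_mem_segment_dist_le hx' hy' hv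
  obtain ⟨p, hpA, hp⟩ := hA hx'A hy'A hv'
  obtain ⟨q, hqB, hq⟩ := hAB p hpA
  exact ⟨q, hqB, by linarith [dist_triangle4 q p v' v]⟩

theorem of_image (e : V →ₗᵢ[ℝ] W) (hA : CoarselyConvex c (e '' A)) : CoarselyConvex c A := by
  intro x hx y hy v hv
  have hev : e v ∈ segment ℝ (e x) (e y) := by
    obtain ⟨a, b, ha, hb, hab, rfl⟩ := hv
    exact ⟨a, b, ha, hb, hab, by simp⟩
  obtain ⟨-, ⟨p, hp, rfl⟩, hpv⟩ := hA (mem_image_of_mem e hx) (mem_image_of_mem e hy) hev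
  exact ⟨p, hp, by rwa [e.dist_map] at hpv⟩

theorem exists_dist_le_of_mem_convexHull_finset (hA : CoarselyConvex c A) {s : Finset V}
    (hs : s.Nonempty) (hsA : ↑s ⊆ A) {v : V} (hv : v ∈ convexHull ℝ (s : Set V)) :
    ∃ p ∈ A, dist p v ≤ s.card * c := by
  induction hs using Finset.Nonempty.cons_induction generalizing v with
  | singleton a =>
    have ha : a ∈ A := hsA (by simp)
    obtain rfl : v = a := by simpa using hv
    exact ⟨v, ha, by simpa using hA.nonneg ⟨v, ha⟩⟩
  | cons a s has hs ih =>
    have haA : a ∈ A := hsA (by simp)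
    rw [Finset.coe_cons, convexHull_insert hs, convexJoin_singleton_left, mem_iUnion₂] at hv
    obtain ⟨w, hw, hvw⟩ := hv
    obtain ⟨p, hpA, hpw⟩ := ih (fun x hx => hsA (by simp [Finset.mem_coe.1 hx])) hw
    obtain ⟨v', hv', hv'v⟩ := exists_mem_segment_dist_le
      ((dist_self a).trans_le (dist_nonneg.trans hpw)) hpw hvw
    obtain ⟨q, hqA, hq⟩ := hA haA hpA hv'
    refine ⟨q, hqA, ?_⟩
    rw [Finset.card_cons]
    push_cast
    linarith [dist_triangle q v' v]

/-- Carathéodory's theorem bounds the number of times the error is made. -/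
theorem exists_dist_le_of_mem_convexHull [FiniteDimensional ℝ V] (hA : CoarselyConvex c A) {v : V}
    (hv : v ∈ convexHull ℝ A) :
    ∃ p ∈ A, dist p v ≤ (Module.finrank ℝ V + 1) * c := by
  rw [convexHull_eq_union] at hv
  simp only [mem_iUnion] at hv
  obtain ⟨s, hsA, hind, hvs⟩ := hv
  have hs : s.Nonempty := by
    rw [← Finset.coe_nonempty, ← convexHull_nonempty_iff (𝕜 := ℝ)]
    exact ⟨v, hvs⟩
  have hcard : s.card ≤ Module.finrank ℝ V + 1 := by
    calc s.card = Fintype.card s := (Fintype.card_coe s).symm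
      _ ≤ Module.finrank ℝ (vectorSpan ℝ (range ((↑) : s → V))) + 1 := hind.card_le_finrank_succ
      _ ≤ Module.finrank ℝ V + 1 := by gcongr; exact Submodule.finrank_le _
  obtain ⟨p, hpA, hp⟩ := hA.exists_dist_le_of_mem_convexHull_finset hs hsA hvs
  refine ⟨p, hpA, hp.trans ?_⟩
  have hc : 0 ≤ c := hA.nonneg ⟨p, hpA⟩
  gcongr
  exact_mod_cast hcard

end CoarselyConvex

end CoarseConvexity

section Displacement

variable {V : Type*} [NormedAddCommGroup V] {F : V → V}

/-- The set `{Fⁿ(z) - z}` of displacements of `F` in time `n`. -/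
def displacementSet (F : V → V) (n : ℕ) : Set V :=
  range fun z => F^[n] z - z

theorem norm_iterate_sub_le {M : ℝ} (hM : ∀ z, ‖F z - z‖ ≤ M) (n : ℕ) (z : V) :
    ‖F^[n] z - z‖ ≤ n * M := by
  induction n with
  | zero => simp
  | succ n ih =>
    rw [Function.iterate_succ_apply', ← sub_add_sub_cancel _ (F^[n] z)]
    push_cast
    linarith [norm_add_le (F (F^[n] z) - F^[n] z) (F^[n] z - z), hM (F^[n] z)]

variable [NormedSpace ℝ V]

theorem exists_mem_convexHull_iterate_mul_sub_eq (F : V → V) (n q : ℕ) (z : V) :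
    ∃ c ∈ convexHull ℝ (displacementSet F n), F^[n * q] z - z = (q : ℝ) • c := by
  induction q with
  | zero => exact ⟨F^[n] z - z, subset_convexHull ℝ _ ⟨z, rfl⟩, by simp⟩
  | succ q ih =>
    obtain ⟨c, hc, hcz⟩ := ih
    obtain ⟨c', hc', hcc'⟩ := (convex_convexHull ℝ _).exists_mem_add_smul_eq hc
      (subset_convexHull ℝ (displacementSet F n) ⟨F^[n * q] z, rfl⟩) q.cast_nonneg zero_le_one
    refine ⟨c', hc', ?_⟩
    rw [Nat.cast_succ, hcc', ← hcz, one_smul, Nat.mul_succ, Nat.add_comm,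
      Function.iterate_add_apply, add_comm, sub_add_sub_cancel]

theorem norm_le_of_mem_convexHull_displacementSet {M : ℝ} (hM : ∀ z, ‖F z - z‖ ≤ M) {n : ℕ}
    {c : V} (hc : c ∈ convexHull ℝ (displacementSet F n)) : ‖c‖ ≤ n * M := by
  have hsub : displacementSet F n ⊆ closedBall 0 (n * M) := by
    rintro - ⟨z, rfl⟩
    simpa using norm_iterate_sub_le hM n z
  simpa using convexHull_min hsub (convex_closedBall _ _) hc

theorem exists_mem_convexHull_norm_smul_sub_le {M : ℝ} (hM : ∀ z, ‖F z - z‖ ≤ M) {n : ℕ}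
    (hn : 0 < n) (N : ℕ) (z : V) :
    ∃ c ∈ convexHull ℝ (displacementSet F n),
      ‖(n : ℝ) • (F^[N] z - z) - (N : ℝ) • c‖ ≤ 2 * n ^ 2 * M := by
  obtain ⟨c, hc, hcz⟩ := exists_mem_convexHull_iterate_mul_sub_eq F n (N / n) z
  refine ⟨c, hc, ?_⟩
  set y := F^[n * (N / n)] z with hy
  set r := N % n
  have hM₀ : 0 ≤ M := (norm_nonneg _).trans (hM z)
  have hr : (r : ℝ) ≤ n := by exact_mod_cast (Nat.mod_lt N hn).le
  have hN : (N : ℝ) = n * (N / n : ℕ) + r := by exact_mod_cast (Nat.div_add_mod N n).symm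
  have hsplit : F^[N] z = F^[r] y := by
    rw [hy, ← Function.iterate_add_apply, Nat.mod_add_div]
  have hrem : (n : ℝ) • (F^[N] z - z) - (N : ℝ) • c = (n : ℝ) • (F^[r] y - y) - (r : ℝ) • c := by
    rw [hsplit, ← sub_add_sub_cancel (F^[r] y) y z, hcz, hN]
    module
  calc ‖(n : ℝ) • (F^[N] z - z) - (N : ℝ) • c‖ = ‖(n : ℝ) • (F^[r] y - y) - (r : ℝ) • c‖ := by
        rw [hrem]
    _ ≤ ‖(n : ℝ) • (F^[r] y - y)‖ + ‖(r : ℝ) • c‖ := norm_sub_le _ _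
    _ = n * ‖F^[r] y - y‖ + r * ‖c‖ := by simp [norm_smul]
    _ ≤ n * (r * M) + r * (n * M) := by
        gcongr
        · exact norm_iterate_sub_le hM r y
        · exact norm_le_of_mem_convexHull_displacementSet hM hc
    _ ≤ n * (n * M) + n * (n * M) := by gcongr
    _ = 2 * n ^ 2 * M := by ring

end Displacement

section RotationSet

variable {d : ℕ} {F : E d → E d}

theorem smul_mem_closure_convexHull_of_mem_rotSet {M : ℝ} (hM : ∀ z, ‖F z - z‖ ≤ M) {ρ : E d}
    (hρ : ρ ∈ rotSet F) {n : ℕ} (hn : 0 < n) :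
    (n : ℝ) • ρ ∈ closure (convexHull ℝ (displacementSet F n)) := by
  obtain ⟨N, z, hN, -, hρ⟩ := hρ
  choose c hc hcN using fun i => exists_mem_convexHull_norm_smul_sub_le hM hn (N i) (z i)
  have hNinv : Tendsto (fun i => (N i : ℝ)⁻¹) atTop (𝓝 0) :=
    tendsto_inv_atTop_zero.comp (tendsto_natCast_atTop_atTop.comp hN)
  have hdiff : Tendsto (fun i => (N i : ℝ)⁻¹ • ((n : ℝ) • (F^[N i] (z i) - z i) - (N i : ℝ) • c i))
      atTop (𝓝 0) :=
    hNinv.zero_smul_isBoundedUnder_le (isBoundedUnder_of ⟨_, hcN⟩)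
  have hlim : Tendsto c atTop (𝓝 ((n : ℝ) • ρ)) := by
    have h := (hρ.const_smul (n : ℝ)).sub hdiff
    rw [sub_zero] at h
    refine h.congr' ?_
    filter_upwards [hN.eventually_gt_atTop 0] with i hi
    have hi' : (N i : ℝ) ≠ 0 := by exact_mod_cast hi.ne'
    rw [smul_comm, smul_sub (N i : ℝ)⁻¹, sub_sub_cancel, inv_smul_smul₀ hi']
  exact mem_closure_of_tendsto hlim (Eventually.of_forall hc)

theorem mem_rotSet_of_forall_smul_mem_closure_convexHull {c : ℝ}
    (hc : ∀ n, CoarselyConvex c (displacementSet F n)) {ρ : E d}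
    (hρ : ∀ n : ℕ, 0 < n → (n : ℝ) • ρ ∈ closure (convexHull ℝ (displacementSet F n))) :
    ρ ∈ rotSet F := by
  have hnear : ∀ n : ℕ, ∃ z, ‖F^[n + 1] z - z - ((n + 1 : ℕ) : ℝ) • ρ‖ ≤ (d + 1) * c + 1 := by
    intro n
    obtain ⟨v, hv, hvρ⟩ := Metric.mem_closure_iff.1 (hρ (n + 1) n.succ_pos) 1 one_pos
    obtain ⟨-, ⟨z, rfl⟩, hz⟩ := (hc (n + 1)).exists_dist_le_of_mem_convexHull hv
    rw [finrank_euclideanSpace_fin] at hz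
    refine ⟨z, ?_⟩
    rw [← dist_eq_norm]
    linarith [dist_triangle (F^[n + 1] z - z) v (((n + 1 : ℕ) : ℝ) • ρ),
      dist_comm v (((n + 1 : ℕ) : ℝ) • ρ)]
  choose z hz using hnear
  refine ⟨fun n => n + 1, z, tendsto_add_atTop_nat 1, fun _ => mem_univ _, ?_⟩
  have hinv : Tendsto (fun n : ℕ => ((n + 1 : ℕ) : ℝ)⁻¹) atTop (𝓝 0) :=
    tendsto_inv_atTop_zero.comp (tendsto_natCast_atTop_atTop.comp (tendsto_add_atTop_nat 1))
  have hdiff := hinv.zero_smul_isBoundedUnder_le (isBoundedUnder_of ⟨_, hz⟩)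
  have hlim := hdiff.add_const ρ
  rw [zero_add] at hlim
  refine hlim.congr fun n => ?_
  rw [smul_sub, inv_smul_smul₀ (by positivity), sub_add_cancel]

theorem convex_rotSet_of_coarselyConvex_displacementSet {M c : ℝ} (hM : ∀ z, ‖F z - z‖ ≤ M)
    (hc : ∀ n, CoarselyConvex c (displacementSet F n)) : Convex ℝ (rotSet F) := by
  have hInter : rotSet F = ⋂ (n : ℕ) (_ : 0 < n),
      (fun ρ => (n : ℝ) • ρ) ⁻¹' closure (convexHull ℝ (displacementSet F n)) := by
    ext ρ
    simp only [mem_iInter, mem_preimage]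
    exact ⟨fun hρ n hn => smul_mem_closure_convexHull_of_mem_rotSet hM hρ hn,
      mem_rotSet_of_forall_smul_mem_closure_convexHull hc⟩
  rw [hInter]
  exact convex_iInter₂ fun n _ => (convex_convexHull ℝ _).closure.smul_preimage (n : ℝ)

end RotationSet

section UnitCell

variable {d : ℕ}

/-- The half-open unit cube `[0, 1)^d`, a fundamental domain for `ℤ^d`. -/
def unitCell (d : ℕ) : Set (E d) := {z | ∀ i, z i ∈ Ico (0 : ℝ) 1}

theorem convex_unitCell (d : ℕ) : Convex ℝ (unitCell d) := by
  have hInter : unitCell d = ⋂ i, (EuclideanSpace.proj i : E d →L[ℝ] ℝ) ⁻¹' Ico 0 1 := by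
    ext z
    simp [unitCell]
  rw [hInter]
  exact convex_iInter fun i => (convex_Ico 0 1).is_linear_preimage
    (EuclideanSpace.proj i : E d →L[ℝ] ℝ).isLinear

theorem zero_mem_unitCell (d : ℕ) : (0 : E d) ∈ unitCell d := fun _ => by simp

theorem norm_le_of_mem_unitCell {z : E d} (hz : z ∈ unitCell d) : ‖z‖ ≤ √d := by
  rw [EuclideanSpace.norm_eq]
  gcongr
  calc ∑ i, ‖z i‖ ^ 2 ≤ ∑ _i : Fin d, (1 : ℝ) := by
        gcongr with i
        exact pow_le_one₀ (norm_nonneg _) (by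
          rw [Real.norm_of_nonneg (hz i).1]
          exact (hz i).2.le)
    _ = d := by simp

theorem exists_mem_ZLat_sub_mem_unitCell (z : E d) : ∃ m ∈ ZLat d, z - m ∈ unitCell d := by
  refine ⟨WithLp.toLp 2 fun i => (⌊z i⌋ : ℝ), fun i => ⟨⌊z i⌋, rfl⟩, fun i => ?_⟩
  exact ⟨Int.fract_nonneg (z i), Int.fract_lt_one (z i)⟩

theorem eq_of_sub_mem_ZLat {x y : E d} (hx : x ∈ unitCell d) (hy : y ∈ unitCell d)
    (hxy : x - y ∈ ZLat d) : x = y := by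
  ext i
  obtain ⟨m, hm⟩ := hxy i
  have hlt : |(m : ℝ)| < 1 := by
    rw [← hm, PiLp.sub_apply, abs_lt]
    constructor <;> linarith [(hx i).1, (hx i).2, (hy i).1, (hy i).2]
  have hm₀ : m = 0 := Int.abs_lt_one_iff.1 (by exact_mod_cast hlt)
  rw [hm₀, PiLp.sub_apply, Int.cast_zero] at hm
  exact sub_eq_zero.1 hm

end UnitCell

section LatticeEquivariance

variable {d : ℕ} {F : E d → E d}

theorem iterate_add_of_mem_ZLat (hF : ∀ z, ∀ m ∈ ZLat d, F (z + m) = F z + m) (n : ℕ) (z : E d)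
    {m : E d} (hm : m ∈ ZLat d) : F^[n] (z + m) = F^[n] z + m :=
  Function.Commute.iterate_left (g := (· + m)) (fun z => hF z m hm) n z

theorem exists_mem_unitCell_sub_eq (hF : ∀ z, ∀ m ∈ ZLat d, F (z + m) = F z + m) (n : ℕ)
    (z : E d) : ∃ z₀ ∈ unitCell d, F^[n] z₀ - z₀ = F^[n] z - z := by
  obtain ⟨m, hm, hz⟩ := exists_mem_ZLat_sub_mem_unitCell z
  refine ⟨z - m, hz, ?_⟩
  have hiter := iterate_add_of_mem_ZLat hF n (z - m) hm
  rw [sub_add_cancel] at hiter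
  rw [hiter]
  abel

theorem exists_norm_sub_le_of_continuous (hF : ∀ z, ∀ m ∈ ZLat d, F (z + m) = F z + m)
    (hcont : Continuous F) : ∃ M, ∀ z, ‖F z - z‖ ≤ M := by
  obtain ⟨M, hM⟩ := (isCompact_closedBall (0 : E d) √d).exists_bound_of_continuousOn
    (hcont.sub continuous_id).continuousOn
  refine ⟨M, fun z => ?_⟩
  obtain ⟨z₀, hz₀, hz⟩ := exists_mem_unitCell_sub_eq hF 1 z
  exact hz ▸ hM z₀ (by simpa using norm_le_of_mem_unitCell hz₀)

theorem eq_of_iterate_sub_iterate_mem_ZLat (hF : ∀ z, ∀ m ∈ ZLat d, F (z + m) = F z + m)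
    (hinj : Function.Injective F) (n : ℕ) {x y : E d} (hx : x ∈ unitCell d)
    (hy : y ∈ unitCell d) (h : F^[n] x - F^[n] y ∈ ZLat d) : F^[n] x = F^[n] y := by
  have hxy : x = y + (F^[n] x - F^[n] y) := hinj.iterate n (by
    rw [iterate_add_of_mem_ZLat hF n y h, add_sub_cancel])
  rw [eq_of_sub_mem_ZLat hx hy (by rwa [sub_eq_iff_eq_add'.2 hxy])]

theorem coarselyConvex_displacementSet {c : ℝ} {n : ℕ}
    (hF : ∀ z, ∀ m ∈ ZLat d, F (z + m) = F z + m) (h : CoarselyConvex c (F^[n] '' unitCell d)) :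
    CoarselyConvex (c + 2 * √d) (displacementSet F n) := by
  have hdist : ∀ z ∈ unitCell d, dist (F^[n] z) (F^[n] z - z) ≤ √d := fun z hz => by
    simpa [dist_eq_norm] using norm_le_of_mem_unitCell hz
  apply h.of_dist_le
  · rintro - ⟨z, rfl⟩
    obtain ⟨z₀, hz₀, hz⟩ := exists_mem_unitCell_sub_eq hF n z
    exact ⟨F^[n] z₀, mem_image_of_mem _ hz₀, by simpa [hz] using hdist z₀ hz₀⟩
  · rintro - ⟨z, hz, rfl⟩
    exact ⟨F^[n] z - z, ⟨z, rfl⟩, (dist_comm _ _).trans_le (hdist z hz)⟩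

end LatticeEquivariance

section Plane

variable {F : E 2 → E 2}

theorem coarselyConvex_iterate_image_unitCell (hF : ∀ z, ∀ m ∈ ZLat 2, F (z + m) = F z + m)
    (hcont : Continuous F) (hinj : Function.Injective F) (n : ℕ) :
    CoarselyConvex 4 (F^[n] '' unitCell 2) := by
  let e : E 2 ≃ₗᵢ[ℝ] ℂ := Complex.orthonormalBasisOneI.repr.symm
  have hpath : IsPathConnected (e '' (F^[n] '' unitCell 2)) :=
    (((convex_unitCell 2).isPathConnected ⟨0, zero_mem_unitCell 2⟩).image
      (hcont.iterate n)).image e.continuous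
  have hdense : ∀ z : ℂ, ∃ m ∈ e '' (ZLat 2 : Set (E 2)), dist m z < 2 := fun z => by
    obtain ⟨m, hm, hz⟩ := exists_mem_ZLat_sub_mem_unitCell (e.symm z)
    refine ⟨e m, mem_image_of_mem _ hm, ?_⟩
    calc dist (e m) z = ‖e.symm z - m‖ := by
          rw [dist_comm, ← dist_eq_norm, ← e.dist_map, e.apply_symm_apply]
      _ ≤ √(2 : ℕ) := norm_le_of_mem_unitCell hz
      _ < 2 := by
          rw [Real.sqrt_lt' two_pos]
          norm_num
  have hdisjoint : ∀ x ∈ e '' (F^[n] '' unitCell 2), ∀ y ∈ e '' (F^[n] '' unitCell 2),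
      x - y ∈ e '' (ZLat 2 : Set (E 2)) → x = y := by
    rintro - ⟨-, ⟨x, hx, rfl⟩, rfl⟩ - ⟨-, ⟨y, hy, rfl⟩, rfl⟩ ⟨m, hm, hxy⟩
    rw [← map_sub] at hxy
    rw [eq_of_iterate_sub_iterate_mem_ZLat hF hinj n hx hy (e.injective hxy ▸ hm)]
  refine CoarselyConvex.of_image e.toLinearIsometry fun x hx y hy v hv => ?_
  obtain ⟨p, hpA, hp⟩ := exists_dist_lt_of_mem_segment hpath hdense hdisjoint hx hy hv
  exact ⟨p, hpA, by linarith⟩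

/-- The Misiurewicz–Ziemian theorem. -/
theorem convex_rotSet (hF : ∀ z, ∀ m ∈ ZLat 2, F (z + m) = F z + m) (hcont : Continuous F)
    (hinj : Function.Injective F) : Convex ℝ (rotSet F) := by
  obtain ⟨M, hM⟩ := exists_norm_sub_le_of_continuous hF hcont
  exact convex_rotSet_of_coarselyConvex_displacementSet hM fun n =>
    coarselyConvex_displacementSet hF (coarselyConvex_iterate_image_unitCell hF hcont hinj n)

end Plane

section Torus

variable {d : ℕ}

theorem symm_add_of_mem_ZLat {F : E d ≃ₜ E d} (hF : ∀ z, ∀ m ∈ ZLat d, F (z + m) = F z + m)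
    (z : E d) {m : E d} (hm : m ∈ ZLat d) : F.symm (z + m) = F.symm z + m :=
  F.injective (by simp [hF _ m hm])

theorem neg_add_mem_ZLat_iff {F : E d ≃ₜ E d} (hF : ∀ z, ∀ m ∈ ZLat d, F (z + m) = F z + m)
    (x y : E d) : -x + y ∈ ZLat d ↔ -F x + F y ∈ ZLat d := by
  constructor <;> intro h
  · have hy := hF x _ h
    rw [add_neg_cancel_left] at hy
    rwa [hy, neg_add_cancel_left]
  · have hy := symm_add_of_mem_ZLat hF (F x) h
    rw [add_neg_cancel_left, F.symm_apply_apply, F.symm_apply_apply] at hy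
    rwa [hy, neg_add_cancel_left]

theorem exists_isLift (F : E d ≃ₜ E d) (hF : ∀ z, ∀ m ∈ ZLat d, F (z + m) = F z + m) :
    ∃ f : T d ≃ₜ T d, IsLift F f :=
  ⟨Homeomorph.Quotient.congr F fun x y => by
    rw [QuotientAddGroup.leftRel_apply, QuotientAddGroup.leftRel_apply, neg_add_mem_ZLat_iff hF],
    fun _ => rfl, hF⟩

theorem inv_smul_mem_rotSet {F : E d → E d} (hF : ∀ z, ∀ m ∈ ZLat d, F (z + m) = F z + m)
    {q : ℕ} (hq : 0 < q) {z m : E d} (hm : m ∈ ZLat d) (hz : F^[q] z = z + m) :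
    (q : ℝ)⁻¹ • m ∈ rotSet F := by
  have hiter : ∀ k : ℕ, F^[q * k] z = z + k • m := fun k => by
    induction k with
    | zero => simp
    | succ k ih =>
      rw [Nat.mul_succ, Nat.add_comm, Function.iterate_add_apply, ih,
        iterate_add_of_mem_ZLat hF q z (nsmul_mem hm k), hz, add_assoc, succ_nsmul']
  refine ⟨fun k => q * (k + 1), fun _ => z, ?_, fun _ => mem_univ _, ?_⟩
  · exact (tendsto_add_atTop_nat 1).const_mul_atTop' hq
  · refine tendsto_const_nhds.congr fun k => ?_
    have hk : ((k + 1 : ℕ) : ℝ) ≠ 0 := by positivity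
    rw [hiter, add_sub_cancel_left, ← Nat.cast_smul_eq_nsmul ℝ, smul_smul, Nat.cast_mul, mul_inv,
      inv_mul_cancel_right₀ hk]

end Torus

section Shear

variable {d : ℕ}

/-- The shear adding `φ (z j)` to the coordinate `z i`. -/
def shear (φ : C(ℝ, ℝ)) {i j : Fin d} (hij : i ≠ j) : E d ≃ₜ E d where
  toFun z := z + φ (z j) • EuclideanSpace.single i (1 : ℝ)
  invFun z := z - φ (z j) • EuclideanSpace.single i (1 : ℝ)
  left_inv z := by simp [hij.symm]
  right_inv z := by simp [hij.symm]
  continuous_toFun := by fun_prop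
  continuous_invFun := by fun_prop

theorem shear_apply (φ : C(ℝ, ℝ)) {i j : Fin d} (hij : i ≠ j) (z : E d) :
    shear φ hij z = z + φ (z j) • EuclideanSpace.single i (1 : ℝ) := rfl

theorem shear_add_of_mem_ZLat {φ : C(ℝ, ℝ)} (hφ : Function.Periodic φ 1) {i j : Fin d}
    (hij : i ≠ j) (z : E d) {m : E d} (hm : m ∈ ZLat d) :
    shear φ hij (z + m) = shear φ hij z + m := by
  obtain ⟨k, hk⟩ := hm j
  have hφk : φ (z j + m j) = φ (z j) := by simpa [hk] using hφ.int_mul k (z j)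
  rw [shear_apply, shear_apply, PiLp.add_apply, hφk]
  abel

end Shear

section Diamond

theorem pt_add_pt (a b a' b' : ℝ) : pt a b + pt a' b' = pt (a + a') (b + b') := by
  ext i
  fin_cases i <;> rfl

theorem smul_pt (c a b : ℝ) : c • pt a b = pt (c * a) (c * b) := by
  ext i
  fin_cases i <;> rfl

theorem pt_eta (z : E 2) : pt (z 0) (z 1) = z := by
  ext i
  fin_cases i <;> rfl

theorem pt_mem_ZLat (a b : ℤ) : pt a b ∈ ZLat 2 := by
  intro i
  fin_cases i
  exacts [⟨a, rfl⟩, ⟨b, rfl⟩]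

-- In the coordinates `x + y` and `x - y` the diamond is a square, whose points are obtained from
-- the vertices by bilinear interpolation.
theorem mem_of_abs_add_abs_le {C : Set (E 2)} (hC : Convex ℝ C) {r : ℝ} (hr : 0 < r)
    (hright : pt r 0 ∈ C) (hleft : pt (-r) 0 ∈ C) (hup : pt 0 r ∈ C) (hdown : pt 0 (-r) ∈ C)
    {x y : ℝ} (hxy : |x| + |y| ≤ r) : pt x y ∈ C := by
  have habs : ∀ {t : ℝ}, |t| ≤ r → 0 ≤ (r + t) / (2 * r) ∧ 0 ≤ (r - t) / (2 * r) := fun ht => by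
    obtain ⟨h₁, h₂⟩ := abs_le.1 ht
    exact ⟨div_nonneg (by linarith) (by positivity), div_nonneg (by linarith) (by positivity)⟩
  have hsum : ∀ t : ℝ, (r + t) / (2 * r) + (r - t) / (2 * r) = 1 := fun t => by field_simp; ring
  obtain ⟨hu, hu'⟩ := habs ((abs_add_le x y).trans hxy)
  obtain ⟨hv, hv'⟩ := habs ((abs_sub x y).trans hxy)
  have hmem := hC (hC hright hup hv hv' (hsum _)) (hC hdown hleft hv hv' (hsum _)) hu hu' (hsum _)
  simp only [smul_pt, pt_add_pt] at hmem
  convert hmem using 2 <;> field_simp <;> ring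

end Diamond

section Fstar

/-- The displacement `t ↦ ½ sin(2πt)` of both shears composing `Fstar`. -/
def halfSine : C(ℝ, ℝ) := ⟨fun t => 1 / 2 * Real.sin (2 * π * t), by fun_prop⟩

theorem halfSine_periodic : Function.Periodic halfSine 1 := fun t => by
  simp [halfSine, mul_add]

theorem halfSine_intCast_div_two (n : ℤ) : halfSine (n / 2) = 0 := by
  have harg : 2 * π * (n / 2) = n * π := by ring
  simp [halfSine, harg]

theorem halfSine_one_div_four : halfSine (1 / 4) = (1 : ℤ) / 2 := by
  have harg : 2 * π * (1 / 4) = π / 2 := by ring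
  rw [halfSine, ContinuousMap.coe_mk, harg, Real.sin_pi_div_two]
  norm_num

theorem halfSine_three_div_four : halfSine (3 / 4) = (-1 : ℤ) / 2 := by
  have harg : 2 * π * (3 / 4) = π / 2 + π := by ring
  rw [halfSine, ContinuousMap.coe_mk, harg, Real.sin_add_pi, Real.sin_pi_div_two]
  norm_num

/-- `Fstar` as a homeomorphism of the plane, factored into two shears. -/
def fstarHomeomorph : E 2 ≃ₜ E 2 :=
  (shear halfSine (i := 1) (j := 0) (by decide)).trans
    (shear halfSine (i := 0) (j := 1) (by decide))

theorem coe_fstarHomeomorph : ⇑fstarHomeomorph = Fstar := by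
  ext z i
  fin_cases i <;> simp [fstarHomeomorph, Fstar, shear_apply, halfSine, pt]

theorem Fstar_add_of_mem_ZLat (z : E 2) (m : E 2) (hm : m ∈ ZLat 2) :
    Fstar (z + m) = Fstar z + m := by
  simp only [← coe_fstarHomeomorph, fstarHomeomorph, Homeomorph.trans_apply,
    shear_add_of_mem_ZLat halfSine_periodic _ _ hm]

theorem Fstar_pt (x y : ℝ) :
    Fstar (pt x y) = pt (x + halfSine (y + halfSine x)) (y + halfSine x) := rfl

theorem iterate_two_Fstar_pt_zero_right {x : ℝ} {n : ℤ} (hx : halfSine x = n / 2) :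
    Fstar^[2] (pt x 0) = pt x 0 + pt 0 n := by
  have hn : halfSine n = 0 := by simpa using halfSine_intCast_div_two (2 * n)
  simp [Fstar_pt, hx, halfSine_intCast_div_two, hn, pt_add_pt]

theorem iterate_two_Fstar_pt_zero_left {y : ℝ} {n : ℤ} (hy : halfSine y = n / 2) :
    Fstar^[2] (pt 0 y) = pt 0 y + pt n 0 := by
  have h₀ : halfSine 0 = 0 := by simpa using halfSine_intCast_div_two 0
  simp [Fstar_pt, hy, halfSine_intCast_div_two, h₀, pt_add_pt]

theorem pt_half_mem_rotSet {z : E 2} {a b : ℤ} (hz : Fstar^[2] z = z + pt a b) :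
    pt (a / 2) (b / 2) ∈ rotSet Fstar := by
  have hmem := inv_smul_mem_rotSet Fstar_add_of_mem_ZLat two_pos (pt_mem_ZLat a b) hz
  simpa [smul_pt, div_eq_inv_mul] using hmem

end Fstar

/-- **The Misiurewicz–Ziemian family at `α = β = ½`.**
`F_*` is a lift of a torus homeomorphism homotopic to the identity, the four
indicated points are 2-periodic with rotation vectors
`(0,½), (½,0), (0,-½), (-½,0) ∈ ρ(F_*)`, and by convexity the square
`Q = {(x,y) : |x| + |y| ≤ ½}` is contained in `ρ(F_*)`. -/
theorem misiurewicz_ziemian_family_half :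
    IsHomeomorph Fstar ∧
    (∀ z : E 2, ∀ m ∈ ZLat 2, Fstar (z + m) = Fstar z + m) ∧
    (∃ f : T 2 ≃ₜ T 2, ∀ z : E 2, tpi 2 (Fstar z) = f (tpi 2 z)) ∧
    Fstar^[2] (pt (1 / 4) 0) = pt (1 / 4) 0 + pt 0 1 ∧
    Fstar^[2] (pt 0 (1 / 4)) = pt 0 (1 / 4) + pt 1 0 ∧
    Fstar^[2] (pt (3 / 4) 0) = pt (3 / 4) 0 + pt 0 (-1) ∧
    Fstar^[2] (pt 0 (3 / 4)) = pt 0 (3 / 4) + pt (-1) 0 ∧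
    pt 0 (1 / 2) ∈ rotSet Fstar ∧ pt (1 / 2) 0 ∈ rotSet Fstar ∧
    pt 0 (-(1 / 2)) ∈ rotSet Fstar ∧ pt (-(1 / 2)) 0 ∈ rotSet Fstar ∧
    {z : E 2 | |z 0| + |z 1| ≤ 1 / 2} ⊆ rotSet Fstar := by
  have hup : Fstar^[2] (pt (1 / 4) 0) = pt (1 / 4) 0 + pt 0 1 := by
    simpa using iterate_two_Fstar_pt_zero_right halfSine_one_div_four
  have hright : Fstar^[2] (pt 0 (1 / 4)) = pt 0 (1 / 4) + pt 1 0 := by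
    simpa using iterate_two_Fstar_pt_zero_left halfSine_one_div_four
  have hdown : Fstar^[2] (pt (3 / 4) 0) = pt (3 / 4) 0 + pt 0 (-1) := by
    simpa using iterate_two_Fstar_pt_zero_right halfSine_three_div_four
  have hleft : Fstar^[2] (pt 0 (3 / 4)) = pt 0 (3 / 4) + pt (-1) 0 := by
    simpa using iterate_two_Fstar_pt_zero_left halfSine_three_div_four
  have hup' : pt 0 (1 / 2) ∈ rotSet Fstar := by
    simpa using pt_half_mem_rotSet (a := 0) (b := 1) (by simpa using hup)
  have hright' : pt (1 / 2) 0 ∈ rotSet Fstar := by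
    simpa using pt_half_mem_rotSet (a := 1) (b := 0) (by simpa using hright)
  have hdown' : pt 0 (-(1 / 2)) ∈ rotSet Fstar := by
    simpa [neg_div] using pt_half_mem_rotSet (a := 0) (b := -1) (by simpa using hdown)
  have hleft' : pt (-(1 / 2)) 0 ∈ rotSet Fstar := by
    simpa [neg_div] using pt_half_mem_rotSet (a := -1) (b := 0) (by simpa using hleft)
  have hhomeo : IsHomeomorph Fstar := coe_fstarHomeomorph ▸ fstarHomeomorph.isHomeomorph
  obtain ⟨f, hf, -⟩ := exists_isLift fstarHomeomorph (coe_fstarHomeomorph ▸ Fstar_add_of_mem_ZLat)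
  have hconvex := convex_rotSet Fstar_add_of_mem_ZLat hhomeo.continuous hhomeo.injective
  exact ⟨hhomeo, Fstar_add_of_mem_ZLat, ⟨f, coe_fstarHomeomorph ▸ hf⟩, hup, hright, hdown, hleft,
    hup', hright', hdown', hleft', fun z hz => pt_eta z ▸
      mem_of_abs_add_abs_le hconvex one_half_pos hright' hleft' hup' hdown' hz⟩
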